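/- Let n, k be positive integers with n > k ≥ 4, (n−2) ≡ 0 (mod k−2), (n−1)(n−2) ≡ 0 (mod (k−1)(k−2)), and n(n−1)(n−2) ≢ 0 (mod k(k−1)(k−2)). Then D(n,k,3) ≤ J(n,k,3) − 3, where J(n,k,3) = ⌊(n/k)·⌊((n−1)/(k−1))·⌊(n−2)/(k−2)⌋⌋⌋. -/

import Mathlib

/-- The packing number D(n,k,t): the maximum number of k-subsets of an n-set
such that every t-subset is contained in at most one of them. -/
noncomputable def packingNumber (n k t : ℕ) : ℕ :=
  sSup {m | ∃ B : Finset (Finset (Fin n)),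
    (∀ b ∈ B, b.card = k) ∧
    (∀ T : Finset (Fin n), T.card = t → (B.filter (fun b => T ⊆ b)).card ≤ 1) ∧
    B.card = m}

/-- Abstract leave of a packing: `L x y` is the set of `z` with `xyz` uncovered. -/
structure Leave (V : Type) [Fintype V] [DecidableEq V] where
  p : ℕ
  hp : 2 ≤ p
  L : V → V → Finset V
  e : V → V → ℕ
  d : V → ℕ
  swap : ∀ x y z, z ∈ L x y → z ∈ L y x
  rot : ∀ x y z, z ∈ L x y → y ∈ L x z
  irr : ∀ x z, z ∉ L x x
  he : ∀ x y, p * e x y = (L x y).card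
  hd : ∀ x, ∑ y, e x y = (p + 1) * d x

namespace Leave

variable {V : Type} [Fintype V] [DecidableEq V] (S : Leave V)

lemma L_comm (x y : V) : S.L x y = S.L y x := by
  ext z; exact ⟨S.swap x y z, S.swap y x z⟩

lemma e_comm (x y : V) : S.e x y = S.e y x := by
  have h1 := S.he x y
  have h2 := S.he y x
  rw [S.L_comm, ← h2] at h1
  have := S.hp
  exact Nat.eq_of_mul_eq_mul_left (by omega) h1

lemma e_self (x : V) : S.e x x = 0 := by
  have h1 := S.he x x
  have : S.L x x = ∅ := Finset.eq_empty_of_forall_notMem (S.irr x)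
  rw [this] at h1
  have := S.hp
  simp at h1
  omega

lemma e_pos {x y z : V} (h : z ∈ S.L x y) : 0 < S.e x y := by
  have h1 := S.he x y
  have : 0 < (S.L x y).card := Finset.card_pos.mpr ⟨z, h⟩
  rcases Nat.eq_zero_or_pos (S.e x y) with h0 | h0
  · rw [h0] at h1; omega
  · exact h0

def N (x : V) : Finset V := Finset.univ.filter (fun y => 0 < S.e x y)

lemma mem_N {x y : V} : y ∈ S.N x ↔ 0 < S.e x y := by simp [N]

lemma mem_N_comm {x y : V} : y ∈ S.N x ↔ x ∈ S.N y := by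
  rw [mem_N, mem_N, e_comm]

lemma not_mem_N_self (x : V) : x ∉ S.N x := by
  rw [mem_N, e_self]; omega

lemma ne_of_mem_N {x y : V} (h : y ∈ S.N x) : y ≠ x := by
  rintro rfl; exact S.not_mem_N_self _ h

lemma L_sub (x y : V) : S.L x y ⊆ (S.N x).erase y := by
  intro z hz
  rw [Finset.mem_erase, mem_N]
  refine ⟨?_, S.e_pos (S.rot _ _ _ hz)⟩
  rintro rfl
  -- z ∈ L x z
  have h1 := S.swap _ _ _ hz
  have h2 := S.rot _ _ _ h1
  exact S.irr _ _ h2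

lemma card_N_ge {x y : V} (h : y ∈ S.N x) : S.p * S.e x y + 1 ≤ (S.N x).card := by
  have h1 := Finset.card_le_card (S.L_sub x y)
  rw [Finset.card_erase_of_mem h, ← S.he] at h1
  have : 0 < (S.N x).card := Finset.card_pos.mpr ⟨y, h⟩
  omega

lemma sum_N (x : V) : ∑ y ∈ S.N x, S.e x y = (S.p + 1) * S.d x := by
  rw [← S.hd]
  apply Finset.sum_subset (Finset.subset_univ _)
  intro y _ hy
  rw [mem_N] at hy; omega

lemma card_N_le (x : V) : (S.N x).card ≤ (S.p + 1) * S.d x := by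
  rw [← sum_N, Finset.card_eq_sum_ones]
  exact Finset.sum_le_sum (fun y hy => S.mem_N.1 hy)

lemma d_pos {x y : V} (h : y ∈ S.N x) : 0 < S.d x := by
  have h1 := S.card_N_le x
  have : 0 < (S.N x).card := Finset.card_pos.mpr ⟨y, h⟩
  rcases Nat.eq_zero_or_pos (S.d x) with h0 | h0
  · rw [h0] at h1; omega
  · exact h0

lemma N_nonempty {x : V} (h : 0 < S.d x) : (S.N x).Nonempty := by
  rw [Finset.nonempty_iff_ne_empty]
  intro h0
  have h1 := S.sum_N x
  rw [h0] at h1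
  simp at h1
  omega

lemma B_card {x : V} (h : S.d x = 1) : (S.N x).card = S.p + 1 := by
  have h1 := S.card_N_le x
  obtain ⟨y, hy⟩ := S.N_nonempty (x := x) (by omega)
  have h2 := S.card_N_ge hy
  have h3 := S.mem_N.1 hy
  rw [h] at h1
  nlinarith

lemma B_e {x y : V} (h : S.d x = 1) (hy : y ∈ S.N x) : S.e x y = 1 := by
  have h2 := S.card_N_ge hy
  have h3 := S.mem_N.1 hy
  rw [S.B_card h] at h2
  have := S.hp
  by_contra h4
  have : 2 ≤ S.e x y := by omega
  nlinarith

lemma B_L {x y z : V} (h : S.d x = 1) (hy : y ∈ S.N x) (hz : z ∈ S.N x) (hzy : z ≠ y) :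
    z ∈ S.L x y := by
  have : S.L x y = (S.N x).erase y := by
    apply Finset.eq_of_subset_of_card_le (S.L_sub x y)
    rw [Finset.card_erase_of_mem hy, S.B_card h, ← S.he, S.B_e h hy]
    omega
  rw [this]
  exact Finset.mem_erase.2 ⟨hzy, hz⟩

lemma A_card {x : V} (h : 2 ≤ S.d x) : 2 * S.p + 1 ≤ (S.N x).card := by
  by_contra hc
  have h1 : ∀ y ∈ S.N x, S.e x y ≤ 1 := by
    intro y hy
    have h2 := S.card_N_ge hy
    by_contra h4
    have : 2 ≤ S.e x y := by omega
    nlinarith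
  have h2 := Finset.sum_le_sum h1
  rw [S.sum_N] at h2
  simp at h2
  nlinarith

def A : Finset V := Finset.univ.filter (fun x => 2 ≤ S.d x)
def B : Finset V := Finset.univ.filter (fun x => S.d x = 1)

lemma mem_A {x : V} : x ∈ S.A ↔ 2 ≤ S.d x := by simp [A]
lemma mem_B {x : V} : x ∈ S.B ↔ S.d x = 1 := by simp [B]

lemma disj : Disjoint S.A S.B := by
  rw [Finset.disjoint_left]
  intro x; rw [mem_A, mem_B]; omega

lemma N_sub (x : V) : S.N x ⊆ (S.A ∪ S.B).erase x := by
  intro y hy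
  rw [Finset.mem_erase, Finset.mem_union, mem_A, mem_B]
  refine ⟨S.ne_of_mem_N hy, ?_⟩
  have := S.d_pos (S.mem_N_comm.1 hy)
  omega

lemma card_AB : (S.A ∪ S.B).card = S.A.card + S.B.card :=
  Finset.card_union_of_disjoint S.disj

lemma AB_ge {x : V} (h : x ∈ S.A) : (S.N x).card + 1 ≤ S.A.card + S.B.card := by
  have h1 := Finset.card_le_card (S.N_sub x)
  rw [Finset.card_erase_of_mem (Finset.mem_union_left _ h), card_AB] at h1
  have : 0 < S.A.card := Finset.card_pos.mpr ⟨x, h⟩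
  omega

lemma sum_d : ∑ x, S.d x = ∑ x ∈ S.A, S.d x + S.B.card := by
  have h1 : S.B.card = ∑ x ∈ S.B, S.d x := by
    rw [Finset.card_eq_sum_ones]
    exact Finset.sum_congr rfl (fun x hx => (S.mem_B.1 hx).symm)
  rw [h1, ← Finset.sum_union S.disj]
  symm
  apply Finset.sum_subset (Finset.subset_univ _)
  intro x _ hx
  rw [Finset.mem_union, mem_A, mem_B] at hx
  omega

lemma sum_e (x : V) : ∑ y ∈ S.A, S.e x y + ∑ y ∈ S.B, S.e x y = (S.p + 1) * S.d x := by
  rw [← Finset.sum_union S.disj, ← S.hd]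
  apply Finset.sum_subset (Finset.subset_univ _)
  intro y _ hy
  by_contra h
  have : y ∈ S.N x := S.mem_N.2 (by omega)
  exact hy (Finset.mem_of_mem_erase (S.N_sub x this))

lemma sum_A_ge : 2 * S.A.card ≤ ∑ x ∈ S.A, S.d x := by
  have : ∑ x ∈ S.A, 2 ≤ ∑ x ∈ S.A, S.d x := Finset.sum_le_sum (fun x hx => S.mem_A.1 hx)
  simp at this
  omega

def Q (b : V) : Finset V := insert b (S.N b)

lemma Q_card {b : V} (h : b ∈ S.B) : (S.Q b).card = S.p + 2 := by
  rw [Q, Finset.card_insert_of_notMem (S.not_mem_N_self b), S.B_card (S.mem_B.1 h)]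

lemma Q_eq {b c : V} (hb : b ∈ S.B) (hc : c ∈ S.B) (h : c ∈ S.Q b) : S.Q c = S.Q b := by
  symm
  apply Finset.eq_of_subset_of_card_le
  · intro z hz
    simp only [Q, Finset.mem_insert] at h hz ⊢
    rcases h with rfl | h
    · exact hz
    · rcases hz with rfl | hz
      · right; exact S.mem_N_comm.1 h
      · by_cases hzc : z = c
        · left; exact hzc
        · right
          have := S.B_L (S.mem_B.1 hb) h hz hzc
          exact S.mem_N.2 (S.e_pos (S.rot _ _ _ (S.swap _ _ _ this)))
  · rw [S.Q_card hb, S.Q_card hc]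

lemma Q_sub {b : V} (h : b ∈ S.B) : S.Q b ⊆ S.A ∪ S.B := by
  intro z hz
  rw [Q, Finset.mem_insert] at hz
  rcases hz with rfl | hz
  · exact Finset.mem_union_right _ h
  · exact Finset.mem_of_mem_erase (S.N_sub b hz)

lemma ne_AB {x b : V} (hx : x ∈ S.A) (hb : b ∈ S.B) : x ≠ b := by
  rintro rfl
  exact Finset.disjoint_left.1 S.disj hx hb

lemma mem_Q {x b : V} (hx : x ∈ S.A) (hb : b ∈ S.B) : x ∈ S.Q b ↔ x ∈ S.N b := by
  rw [Q, Finset.mem_insert]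
  have := S.ne_AB hx hb
  tauto

lemma e_B {x b : V} (hx : x ∈ S.A) (hb : b ∈ S.B) :
    S.e x b = if x ∈ S.Q b then 1 else 0 := by
  split_ifs with h
  · rw [S.mem_Q hx hb] at h
    rw [S.e_comm]; exact S.B_e (S.mem_B.1 hb) h
  · rw [S.mem_Q hx hb, mem_N, S.e_comm] at h; omega

lemma L_of_Q {x y b : V} (hx : x ∈ S.A) (hy : y ∈ S.A) (hxy : x ≠ y) (hb : b ∈ S.B)
    (h1 : x ∈ S.Q b) (h2 : y ∈ S.Q b) : b ∈ S.L x y := by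
  rw [S.mem_Q hx hb] at h1
  rw [S.mem_Q hy hb] at h2
  have := S.B_L (S.mem_B.1 hb) h1 h2 hxy.symm
  exact S.rot _ _ _ (S.swap _ _ _ this)

lemma Q_of_L {x y b : V} (hx : x ∈ S.A) (hy : y ∈ S.A) (hb : b ∈ S.B)
    (h : b ∈ S.L x y) : x ∈ S.Q b ∧ y ∈ S.Q b := by
  rw [S.mem_Q hx hb, S.mem_Q hy hb]
  refine ⟨S.mem_N_comm.1 (S.mem_N.2 (S.e_pos (S.rot _ _ _ h))), ?_⟩
  exact S.mem_N_comm.1 (S.mem_N.2 (S.e_pos (S.rot _ _ _ (S.swap _ _ _ h))))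

/-- The set of cliques. -/
def QQ : Finset (Finset V) := S.B.image S.Q

lemma ab {q : Finset V} (hq : q ∈ S.QQ) : (S.A ∩ q).card + (S.B ∩ q).card = S.p + 2 := by
  obtain ⟨b, hb, rfl⟩ := Finset.mem_image.1 hq
  rw [← S.Q_card hb, ← Finset.card_union_of_disjoint, ← Finset.union_inter_distrib_right,
    Finset.inter_eq_right.2 (S.Q_sub hb)]
  exact S.disj.mono Finset.inter_subset_left Finset.inter_subset_left

lemma fiber {q : Finset V} (hq : q ∈ S.QQ) : S.B.filter (fun c => S.Q c = q) = S.B ∩ q := by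
  obtain ⟨b, hb, rfl⟩ := Finset.mem_image.1 hq
  ext c
  rw [Finset.mem_filter, Finset.mem_inter]
  constructor
  · rintro ⟨h1, h2⟩
    refine ⟨h1, ?_⟩
    rw [← h2, Q]; exact Finset.mem_insert_self _ _
  · rintro ⟨h1, h2⟩
    exact ⟨h1, S.Q_eq hb h1 h2⟩

lemma sumB (g : Finset V → ℕ) : ∑ b ∈ S.B, g (S.Q b) = ∑ q ∈ S.QQ, (S.B ∩ q).card * g q := by
  rw [Finset.sum_comp]
  apply Finset.sum_congr rfl
  intro q hq
  rw [S.fiber hq, smul_eq_mul]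

def q1 (x : V) : ℕ := ∑ q ∈ S.QQ, if x ∈ q then 1 else 0
def q2 (x y : V) : ℕ := ∑ q ∈ S.QQ, if x ∈ q ∧ y ∈ q then 1 else 0

lemma F3 : ∑ x ∈ S.A, S.q1 x + S.B.card = (S.p + 2) * S.QQ.card := by
  have h1 : S.B.card = ∑ q ∈ S.QQ, (S.B ∩ q).card := by
    have := S.sumB (fun _ => 1)
    simpa using this
  have h2 : ∑ x ∈ S.A, S.q1 x = ∑ q ∈ S.QQ, (S.A ∩ q).card := by
    unfold q1
    rw [Finset.sum_comm]
    apply Finset.sum_congr rfl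
    intro q _
    rw [← Finset.card_filter, Finset.filter_mem_eq_inter]
  rw [h1, h2, ← Finset.sum_add_distrib, Finset.sum_congr rfl (fun q hq => S.ab hq)]
  simp [mul_comm]

lemma F1 {x : V} (hx : x ∈ S.A) :
    ∑ y ∈ S.A, S.q2 x y + ∑ b ∈ S.B, S.e x b = (S.p + 2) * S.q1 x := by
  have h1 : ∑ b ∈ S.B, S.e x b = ∑ q ∈ S.QQ, (S.B ∩ q).card * (if x ∈ q then 1 else 0) := by
    rw [← S.sumB (fun q => if x ∈ q then 1 else 0)]
    exact Finset.sum_congr rfl (fun b hb => S.e_B hx hb)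
  have h2 : ∑ y ∈ S.A, S.q2 x y = ∑ q ∈ S.QQ, (S.A ∩ q).card * (if x ∈ q then 1 else 0) := by
    unfold q2
    rw [Finset.sum_comm]
    apply Finset.sum_congr rfl
    intro q _
    by_cases h : x ∈ q
    · simp only [h, true_and, if_true, mul_one]
      rw [← Finset.card_filter, Finset.filter_mem_eq_inter]
    · simp [h]
  rw [h1, h2, ← Finset.sum_add_distrib, q1, Finset.mul_sum]
  apply Finset.sum_congr rfl
  intro q hq
  rw [← add_mul, S.ab hq]

lemma q2_self (x : V) : S.q2 x x = S.q1 x := by simp [q1, q2]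

lemma q1_le (x : V) : S.q1 x ≤ S.QQ.card := by
  rw [q1, ← Finset.card_filter]; exact Finset.card_filter_le _ _

lemma q2_le (x y : V) : S.q2 x y ≤ S.QQ.card := by
  rw [q2, ← Finset.card_filter]; exact Finset.card_filter_le _ _

lemma q1_all {x : V} (h : S.q1 x = S.QQ.card) {b : V} (hb : b ∈ S.B) : x ∈ S.Q b := by
  rw [q1, ← Finset.card_filter, Finset.card_filter_eq_iff] at h
  exact h _ (Finset.mem_image_of_mem _ hb)

lemma q2_all {x y : V} (h : S.q2 x y = S.QQ.card) {b : V} (hb : b ∈ S.B) :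
    x ∈ S.Q b ∧ y ∈ S.Q b := by
  rw [q2, ← Finset.card_filter, Finset.card_filter_eq_iff] at h
  exact h _ (Finset.mem_image_of_mem _ hb)

lemma q2_pos {x y : V} (h : 0 < S.q2 x y) : ∃ b ∈ S.B, x ∈ S.Q b ∧ y ∈ S.Q b := by
  rw [q2, ← Finset.card_filter, Finset.card_pos] at h
  obtain ⟨q, hq⟩ := h
  rw [Finset.mem_filter, QQ, Finset.mem_image] at hq
  obtain ⟨⟨b, hb, rfl⟩, h2⟩ := hq
  exact ⟨b, hb, h2⟩

lemma C1 (ha : S.A.card ≤ S.p + 1) {x y : V} (hx : x ∈ S.A) (hy : y ∈ S.A) (hxy : x ≠ y) :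
    S.e x y ≤ S.q2 x y := by
  have h1 : S.L x y ⊆ ((S.A.erase x).erase y) ∪ S.B.filter (fun b => x ∈ S.Q b ∧ y ∈ S.Q b) := by
    intro z hz
    have hz1 := S.L_sub _ _ hz
    have hz2 := S.N_sub _ (Finset.mem_of_mem_erase hz1)
    rw [Finset.mem_erase] at hz1
    rw [Finset.mem_erase, Finset.mem_union] at hz2
    rw [Finset.mem_union, Finset.mem_erase, Finset.mem_erase, Finset.mem_filter]
    rcases hz2.2 with h | h
    · left; exact ⟨hz1.1, hz2.1, h⟩
    · right; exact ⟨h, S.Q_of_L hx hy h hz⟩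
  have h2 : (S.B.filter (fun b => x ∈ S.Q b ∧ y ∈ S.Q b)).card ≤ S.p * S.q2 x y := by
    rw [Finset.card_filter, S.sumB (fun q => if x ∈ q ∧ y ∈ q then 1 else 0), q2, Finset.mul_sum]
    apply Finset.sum_le_sum
    intro q hq
    split_ifs with h
    · have h3 := S.ab hq
      have h4 : ({x, y} : Finset V) ⊆ S.A ∩ q := by
        intro z hz
        rw [Finset.mem_insert, Finset.mem_singleton] at hz
        rw [Finset.mem_inter]
        rcases hz with rfl | rfl
        · exact ⟨hx, h.1⟩
        · exact ⟨hy, h.2⟩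
      have h5 := Finset.card_le_card h4
      rw [Finset.card_pair hxy] at h5
      omega
    · simp
  have h3 := (Finset.card_le_card h1).trans (Finset.card_union_le _ _)
  rw [← S.he, Finset.card_erase_of_mem (Finset.mem_erase.2 ⟨hxy.symm, hy⟩),
    Finset.card_erase_of_mem hx] at h3
  have := S.hp
  by_contra hc
  have : S.q2 x y + 1 ≤ S.e x y := by omega
  have : S.p * (S.q2 x y + 1) ≤ S.p * S.e x y := Nat.mul_le_mul_left _ this
  rw [mul_add] at this
  omega

lemma C2 (ha : S.A.card ≤ S.p + 1) {x : V} (hx : x ∈ S.A) : S.d x ≤ S.q1 x := by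
  have h1 := S.sum_e x
  have h2 := S.F1 hx
  rw [← Finset.add_sum_erase _ _ hx] at h1 h2
  rw [S.e_self] at h1
  rw [S.q2_self] at h2
  have h3 : ∑ y ∈ S.A.erase x, S.e x y ≤ ∑ y ∈ S.A.erase x, S.q2 x y :=
    Finset.sum_le_sum (fun y hy => S.C1 ha hx (Finset.mem_of_mem_erase hy)
      (Finset.ne_of_mem_erase hy).symm)
  have : (S.p + 1) * S.d x ≤ (S.p + 1) * S.q1 x := by nlinarith
  exact Nat.le_of_mul_le_mul_left this (by omega)

lemma C3 (ha : S.A.card ≤ S.p + 1) : ∑ x, S.d x ≤ (S.p + 2) * S.QQ.card := by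
  rw [sum_d, ← F3]
  have := Finset.sum_le_sum (fun x hx => S.C2 ha (x := x) hx)
  omega

lemma small (ha : S.A.card ≤ S.p + 1) (hq : 3 ≤ S.QQ.card) (hs : ∑ x, S.d x < 3 * (S.p + 2)) :
    False := by
  obtain ⟨x, hx, hx1⟩ : ∃ x ∈ S.A, S.d x + S.QQ.card < S.q1 x + 3 := by
    by_contra hc
    push Not at hc
    have h := Finset.sum_le_sum hc
    rw [Finset.sum_add_distrib, Finset.sum_add_distrib] at h
    simp only [Finset.sum_const, smul_eq_mul] at h
    have h3 := S.F3
    rw [sum_d] at hs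
    obtain ⟨u, hu⟩ := Nat.exists_eq_add_of_le hq
    obtain ⟨v, hv⟩ := Nat.exists_eq_add_of_le (show S.A.card ≤ S.p + 2 by omega)
    rw [hu] at h h3
    rw [hv] at hs h3
    nlinarith
  have hd2 := S.mem_A.1 hx
  have hq1 := S.q1_le x
  have hdx : S.d x = 2 := by omega
  have hqx : S.q1 x = S.QQ.card := by omega
  have hb : ∑ b ∈ S.B, S.e x b = S.B.card := by
    rw [Finset.card_eq_sum_ones]
    apply Finset.sum_congr rfl
    intro b hb
    rw [S.e_B hx hb, if_pos (S.q1_all hqx hb)]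
  have ha0 : 0 < S.A.card := Finset.card_pos.mpr ⟨x, hx⟩
  obtain ⟨y, hy, hy1⟩ : ∃ y ∈ S.A.erase x, S.e x y + S.QQ.card < S.q2 x y + 2 := by
    by_contra hc
    push Not at hc
    have h := Finset.sum_le_sum hc
    rw [Finset.sum_add_distrib, Finset.sum_add_distrib] at h
    simp only [Finset.sum_const, smul_eq_mul] at h
    rw [Finset.card_erase_of_mem hx] at h
    have h1 := S.sum_e x
    have h2 := S.F1 hx
    rw [← Finset.add_sum_erase _ _ hx] at h1 h2
    rw [S.e_self, hb, hdx] at h1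
    rw [S.q2_self, hb, hqx] at h2
    obtain ⟨u, hu⟩ := Nat.exists_eq_add_of_le hq
    obtain ⟨w, hw⟩ := Nat.exists_eq_add_of_le ha0
    obtain ⟨v, hv⟩ := Nat.exists_eq_add_of_le (show w ≤ S.p by omega)
    have hw' : S.A.card - 1 = w := by omega
    rw [hw'] at h
    rw [hu] at h h2
    rw [hv] at h1 h2
    nlinarith
  have hxy := (Finset.ne_of_mem_erase hy).symm
  replace hy := Finset.mem_of_mem_erase hy
  have hq2 := S.q2_le x y
  obtain ⟨b, hb1, hb2, hb3⟩ := S.q2_pos (x := x) (y := y) (by omega)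
  have he0 := S.e_pos (S.L_of_Q hx hy hxy hb1 hb2 hb3)
  have he1 : S.e x y = 1 := by omega
  have hqq : S.q2 x y = S.QQ.card := by omega
  have hsub : S.B ⊆ S.L x y := by
    intro c hc
    have := S.q2_all hqq hc
    exact S.L_of_Q hx hy hxy hc this.1 this.2
  have h1 := Finset.card_le_card hsub
  rw [← S.he, he1] at h1
  have h2 := S.AB_ge hx
  have h3 := S.A_card hd2
  omega

lemma full {x b : V} (hx : x ∈ S.A) (hb : b ∈ S.B) (h : S.A.card + S.B.card = 2 * S.p + 2) :
    x ∈ S.N b := by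
  have h1 : S.N x = (S.A ∪ S.B).erase x := by
    apply Finset.eq_of_subset_of_card_le (S.N_sub x)
    rw [Finset.card_erase_of_mem (Finset.mem_union_left _ hx), card_AB]
    have := S.A_card (S.mem_A.1 hx)
    omega
  apply S.mem_N_comm.1
  rw [h1, Finset.mem_erase]
  exact ⟨(S.ne_AB hx hb).symm, Finset.mem_union_right _ hb⟩

lemma last (ha : S.A.card = S.p + 2) (hb : S.B.card = S.p + 1)
    (hs : ∑ x, S.d x < 3 * (S.p + 2)) : False := by
  have hp := S.hp
  have hd2 : ∀ x ∈ S.A, S.d x = 2 := by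
    intro x hx
    by_contra hne
    have h1 : ∑ x ∈ S.A, 2 < ∑ x ∈ S.A, S.d x := by
      apply Finset.sum_lt_sum (fun x hx => S.mem_A.1 hx)
      refine ⟨x, hx, ?_⟩
      have := S.mem_A.1 hx
      omega
    rw [sum_d] at hs
    simp at h1
    omega
  have hex : ∀ b ∈ S.B, ∃ x ∈ S.A, x ∉ S.N b := by
    intro b hb1
    by_contra hc
    push Not at hc
    have := Finset.card_le_card hc
    rw [S.B_card (S.mem_B.1 hb1)] at this
    omega
  choose! f hfA hfN using hex
  have hNf : ∀ b ∈ S.B, S.N (f b) = ((S.A ∪ S.B).erase (f b)).erase b := by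
    intro b hb1
    apply Finset.eq_of_subset_of_card_le
    · intro z hz
      rw [Finset.mem_erase]
      refine ⟨?_, S.N_sub _ hz⟩
      rintro rfl
      exact hfN _ hb1 (S.mem_N_comm.1 hz)
    · rw [Finset.card_erase_of_mem, Finset.card_erase_of_mem
        (Finset.mem_union_left _ (hfA b hb1)), card_AB]
      · have := S.A_card (S.mem_A.1 (hfA b hb1))
        omega
      · rw [Finset.mem_erase]
        exact ⟨(S.ne_AB (hfA b hb1) hb1).symm, Finset.mem_union_right _ hb1⟩
  have hNcard : ∀ b ∈ S.B, (S.N (f b)).card = 2 * S.p + 1 := by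
    intro b hb1
    have h1 := S.A_card (S.mem_A.1 (hfA b hb1))
    rw [hNf b hb1, Finset.card_erase_of_mem, Finset.card_erase_of_mem
        (Finset.mem_union_left _ (hfA b hb1)), card_AB]
    · omega
    · rw [Finset.mem_erase]
      exact ⟨(S.ne_AB (hfA b hb1) hb1).symm, Finset.mem_union_right _ hb1⟩
  have hadj : ∀ b ∈ S.B, ∀ c ∈ S.B, c ≠ b → f b ∈ S.N c := by
    intro b hb1 c hc hcb
    apply S.mem_N_comm.1
    rw [hNf b hb1, Finset.mem_erase, Finset.mem_erase]
    exact ⟨hcb, (S.ne_AB (hfA b hb1) hc).symm, Finset.mem_union_right _ hc⟩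
  have hNb : ∀ b ∈ S.B, S.N b = S.A.erase (f b) := by
    intro b hb1
    apply Finset.eq_of_subset_of_card_le
    · intro z hz
      rw [Finset.mem_erase]
      refine ⟨?_, ?_⟩
      · rintro rfl; exact hfN b hb1 hz
      · have h1 := S.N_sub _ hz
        rw [Finset.mem_erase, Finset.mem_union] at h1
        rcases h1.2 with h | h
        · exact h
        · exfalso
          have h2 := S.Q_eq hb1 h (by rw [Q]; exact Finset.mem_insert_of_mem hz)
          have h3 := hadj b hb1 z h h1.1
          rw [← S.mem_Q (hfA b hb1) h, h2, S.mem_Q (hfA b hb1) hb1] at h3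
          exact hfN b hb1 h3
    · rw [Finset.card_erase_of_mem (hfA b hb1), S.B_card (S.mem_B.1 hb1)]
      omega
  have hinj : Set.InjOn f S.B := by
    intro b hb1 c hc hbc
    by_contra hne
    have h1 := hadj b hb1 c hc (Ne.symm hne)
    rw [hbc] at h1
    exact hfN c hc h1
  have himg : (S.B.image f).card = S.p + 1 := by
    rw [Finset.card_image_of_injOn hinj, hb]
  have himgA : S.B.image f ⊆ S.A := by
    intro z hz
    obtain ⟨b, hb1, rfl⟩ := Finset.mem_image.1 hz
    exact hfA b hb1
  have hdiff : (S.A \ S.B.image f).card = 1 := by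
    rw [Finset.card_sdiff_of_subset himgA, ha, himg]; omega
  obtain ⟨w, hw⟩ := Finset.card_eq_one.1 hdiff
  have hwm : w ∈ S.A \ S.B.image f := by rw [hw]; exact Finset.mem_singleton_self _
  rw [Finset.mem_sdiff] at hwm
  have hwe : ∀ b ∈ S.B, 2 ≤ S.e w (f b) := by
    intro b hb1
    obtain ⟨y, hy, hy2⟩ : ∃ y ∈ S.N (f b), 2 ≤ S.e (f b) y := by
      by_contra hc
      push Not at hc
      have h := Finset.sum_le_sum (fun y hy => Nat.le_of_lt_succ (hc y hy))
      rw [S.sum_N, hd2 _ (hfA b hb1)] at h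
      simp only [Finset.sum_const, smul_eq_mul] at h
      rw [hNcard b hb1] at h
      omega
    have hyA : y ∈ S.A := by
      have h1 := S.N_sub _ hy
      rw [Finset.mem_erase, Finset.mem_union] at h1
      rcases h1.2 with h | h
      · exact h
      · rw [S.e_B (hfA b hb1) h] at hy2
        split_ifs at hy2 <;> omega
    have hL : S.L (f b) y = (S.N (f b)).erase y := by
      apply Finset.eq_of_subset_of_card_le (S.L_sub _ _)
      rw [Finset.card_erase_of_mem hy, hNcard b hb1, ← S.he]
      have := Nat.mul_le_mul_left S.p hy2
      omega
    have hyimg : y ∉ S.B.image f := by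
      intro h
      obtain ⟨c, hc, rfl⟩ := Finset.mem_image.1 h
      by_cases hcb : c = b
      · subst hcb; exact S.not_mem_N_self _ hy
      · have h1 : c ∈ S.L (f b) (f c) := by
          rw [hL, Finset.mem_erase]
          exact ⟨(S.ne_AB (hfA c hc) hc).symm, S.mem_N_comm.1 (hadj b hb1 c hc hcb)⟩
        have h2 := S.e_pos (S.rot _ _ _ (S.swap _ _ _ h1))
        exact hfN c hc (S.mem_N_comm.1 (S.mem_N.2 h2))
    have : y ∈ S.A \ S.B.image f := Finset.mem_sdiff.2 ⟨hyA, hyimg⟩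
    rw [hw, Finset.mem_singleton] at this
    rw [← this, S.e_comm]
    exact hy2
  have h1 := S.sum_e w
  rw [hd2 w hwm.1] at h1
  have h2 : ∑ b ∈ S.B, 2 ≤ ∑ y ∈ S.B.image f, S.e w y := by
    rw [Finset.sum_image hinj]
    exact Finset.sum_le_sum hwe
  have h3 : ∑ y ∈ S.B.image f, S.e w y ≤ ∑ y ∈ S.A, S.e w y :=
    Finset.sum_le_sum_of_subset himgA
  obtain ⟨b, hb1⟩ : S.B.Nonempty := Finset.card_pos.1 (by omega)
  have h4 : S.e w b ≤ ∑ y ∈ S.B, S.e w y :=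
    Finset.single_le_sum (f := fun y => S.e w y) (fun _ _ => Nat.zero_le _) hb1
  have h5 : 0 < S.e w b := by
    rw [S.e_comm]
    apply S.mem_N.1
    rw [hNb b hb1, Finset.mem_erase]
    refine ⟨?_, hwm.1⟩
    rintro rfl
    exact hwm.2 (Finset.mem_image_of_mem _ hb1)
  simp only [Finset.sum_const, smul_eq_mul] at h2
  rw [hb] at h2
  omega

theorem core (hs : ∑ x, S.d x < 3 * (S.p + 2)) : (S.p + 2) ∣ ∑ x, S.d x := by
  have hp := S.hp
  rcases Finset.eq_empty_or_nonempty S.A with hA | ⟨x, hx⟩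
  · have h1 := S.F3
    rw [sum_d, hA]
    rw [hA] at h1
    simp at h1 ⊢
    exact ⟨_, h1⟩
  · by_contra hdvd
    have h1 := S.AB_ge hx
    have h2 := S.A_card (S.mem_A.1 hx)
    have h3 := S.sum_A_ge
    have h4 := S.sum_d
    rcases Nat.lt_or_ge (S.p + 1) S.A.card with h | h
    · by_cases h5 : S.A.card + S.B.card = 2 * S.p + 2
      · obtain ⟨b, hb⟩ : S.B.Nonempty := Finset.card_pos.1 (by omega)
        have h6 : S.A ⊆ S.N b := fun y hy => S.full hy hb h5
        have h7 := Finset.card_le_card h6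
        rw [S.B_card (S.mem_B.1 hb)] at h7
        omega
      · exact S.last (by omega) (by omega) hs
    · have h5 := S.C3 h
      rcases Nat.lt_or_ge S.QQ.card 3 with hq | hq
      · have h6 := S.F3
        have h7 : ∑ x ∈ S.A, S.q1 x ≤ ∑ x ∈ S.A, S.QQ.card :=
          Finset.sum_le_sum (fun x _ => S.q1_le x)
        simp only [Finset.sum_const, smul_eq_mul] at h7
        have h8 : ∑ x, S.d x ≠ (S.p + 2) * S.QQ.card := fun h => hdvd ⟨_, h⟩
        generalize S.QQ.card = q at *
        interval_cases q <;> omega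
      · exact S.small h hq hs

end Leave

section Bridge

variable {n k : ℕ} (B : Finset (Finset (Fin n)))

/-- Number of blocks through two points. -/
def pairDeg (x y : Fin n) : ℕ := (B.filter (fun b => x ∈ b ∧ y ∈ b)).card

/-- Number of blocks through a point. -/
def ptDeg (x : Fin n) : ℕ := (B.filter (fun b => x ∈ b)).card

/-- Uncovered triples. -/
def leaveSet (x y : Fin n) : Finset (Fin n) :=
  Finset.univ.filter (fun z => x ≠ y ∧ x ≠ z ∧ y ≠ z ∧ ∀ b ∈ B, ¬ (x ∈ b ∧ y ∈ b ∧ z ∈ b))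

lemma leave_count (hB : ∀ b ∈ B, b.card = k)
    (hT : ∀ T : Finset (Fin n), T.card = 3 → (B.filter (fun b => T ⊆ b)).card ≤ 1)
    {x y : Fin n} (hxy : x ≠ y) :
    (leaveSet B x y).card + (k - 2) * pairDeg B x y = n - 2 := by
  have h1 : ((B.filter (fun b => x ∈ b ∧ y ∈ b)).biUnion (fun b => (b.erase x).erase y)).card
      = (k - 2) * pairDeg B x y := by
    rw [Finset.card_biUnion]
    · rw [pairDeg, Finset.sum_congr rfl (g := fun _ => k - 2)]
      · simp [mul_comm]
      · intro b hb
        rw [Finset.mem_filter] at hb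
        rw [Finset.card_erase_of_mem (Finset.mem_erase.2 ⟨hxy.symm, hb.2.2⟩),
          Finset.card_erase_of_mem hb.2.1, hB b hb.1]
        omega
    · intro b hb c hc hbc
      rw [Finset.mem_coe, Finset.mem_filter] at hb hc
      show Disjoint _ _
      rw [Finset.disjoint_left]
      intro z hz hz'
      simp only [Finset.mem_erase] at hz hz'
      apply hbc
      have hcard : ({x, y, z} : Finset (Fin n)).card = 3 := by
        rw [Finset.card_eq_three]
        exact ⟨x, y, z, hxy, Ne.symm hz.2.1, Ne.symm hz.1, rfl⟩
      have h := Finset.card_le_one.1 (hT _ hcard)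
      apply h
      · rw [Finset.mem_filter]
        refine ⟨hb.1, ?_⟩
        intro w hw
        simp only [Finset.mem_insert, Finset.mem_singleton] at hw
        rcases hw with rfl | rfl | rfl
        · exact hb.2.1
        · exact hb.2.2
        · exact hz.2.2
      · rw [Finset.mem_filter]
        refine ⟨hc.1, ?_⟩
        intro w hw
        simp only [Finset.mem_insert, Finset.mem_singleton] at hw
        rcases hw with rfl | rfl | rfl
        · exact hc.2.1
        · exact hc.2.2
        · exact hz'.2.2
  rw [← h1, ← Finset.card_union_of_disjoint]
  · have : leaveSet B x y ∪ ((B.filter (fun b => x ∈ b ∧ y ∈ b)).biUnion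
        (fun b => (b.erase x).erase y)) = (Finset.univ.erase x).erase y := by
      ext z
      simp only [leaveSet, Finset.mem_union, Finset.mem_filter, Finset.mem_univ, true_and,
        Finset.mem_biUnion, Finset.mem_erase, and_true]
      constructor
      · rintro (h | ⟨b, _, h⟩)
        · exact ⟨Ne.symm h.2.2.1, Ne.symm h.2.1⟩
        · exact ⟨h.1, h.2.1⟩
      · rintro ⟨h1, h2⟩
        by_cases h : ∃ b ∈ B, x ∈ b ∧ y ∈ b ∧ z ∈ b
        · right
          obtain ⟨b, hb, h3, h4, h5⟩ := h
          exact ⟨b, ⟨hb, h3, h4⟩, h1, h2, h5⟩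
        · left
          push Not at h
          refine ⟨hxy, Ne.symm h2, Ne.symm h1, ?_⟩
          rintro b hb ⟨h3, h4, h5⟩
          exact h b hb h3 h4 h5
    rw [this, Finset.card_erase_of_mem (Finset.mem_erase.2 ⟨hxy.symm, Finset.mem_univ _⟩),
      Finset.card_erase_of_mem (Finset.mem_univ _), Finset.card_univ, Fintype.card_fin]
    omega
  · rw [Finset.disjoint_left]
    intro z hz hz'
    simp only [leaveSet, Finset.mem_filter, Finset.mem_univ, true_and] at hz
    simp only [Finset.mem_biUnion, Finset.mem_filter, Finset.mem_erase] at hz'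
    obtain ⟨b, h1, h2⟩ := hz'
    exact hz.2.2.2 b h1.1 ⟨h1.2.1, h1.2.2, h2.2.2⟩

lemma pair_sum (hB : ∀ b ∈ B, b.card = k) (x : Fin n) :
    ∑ y ∈ Finset.univ.erase x, pairDeg B x y = (k - 1) * ptDeg B x := by
  have h : ∀ y, pairDeg B x y = ∑ b ∈ B.filter (fun b => x ∈ b), if y ∈ b then 1 else 0 := by
    intro y
    rw [pairDeg, ← Finset.card_filter, Finset.filter_filter]
  simp_rw [h]
  rw [Finset.sum_comm, Finset.sum_congr rfl (g := fun _ => k - 1)]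
  · simp [ptDeg, mul_comm]
  · intro b hb
    rw [Finset.mem_filter] at hb
    rw [← Finset.card_filter, Finset.filter_mem_eq_inter, Finset.erase_inter, Finset.univ_inter,
      Finset.card_erase_of_mem hb.2, hB b hb.1]

lemma pt_sum (hB : ∀ b ∈ B, b.card = k) : ∑ x, ptDeg B x = k * B.card := by
  simp_rw [ptDeg, Finset.card_filter]
  rw [Finset.sum_comm, Finset.sum_congr rfl (g := fun _ => k)]
  · simp [mul_comm]
  · intro b hb
    rw [← Finset.card_filter, Finset.filter_mem_eq_inter, Finset.univ_inter, hB b hb]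

lemma packing_bound {r s : ℕ} (hk : 4 ≤ k) (hkn : k < n) (hr : n - 2 = (k - 2) * r)
    (hs : (n - 1) * r = (k - 1) * s) (hns : ¬ k ∣ n * s)
    (hB : ∀ b ∈ B, b.card = k)
    (hT : ∀ T : Finset (Fin n), T.card = 3 → (B.filter (fun b => T ⊆ b)).card ≤ 1) :
    k * (B.card + 3) ≤ n * s := by
  have hle : ∀ x y : Fin n, x ≠ y → pairDeg B x y ≤ r := by
    intro x y hxy
    have h := leave_count B hB hT hxy
    rw [hr] at h
    exact Nat.le_of_mul_le_mul_left (show (k - 2) * pairDeg B x y ≤ (k - 2) * r by omega)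
      (by omega)
  have hsum : ∀ x : Fin n, ∑ y ∈ Finset.univ.erase x, (r - pairDeg B x y)
      + (k - 1) * ptDeg B x = (k - 1) * s := by
    intro x
    rw [← pair_sum B hB, ← Finset.sum_add_distrib, Finset.sum_congr rfl (g := fun _ => r)]
    · rw [Finset.sum_const, Finset.card_erase_of_mem (Finset.mem_univ _), Finset.card_univ,
        Fintype.card_fin, smul_eq_mul, hs]
    · intro y hy
      have := hle x y (Finset.ne_of_mem_erase hy).symm
      omega
  have hpt : ∀ x, ptDeg B x ≤ s := by
    intro x
    have := hsum x
    exact Nat.le_of_mul_le_mul_left (show (k - 1) * ptDeg B x ≤ (k - 1) * s by omega) (by omega)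
  let S : Leave (Fin n) :=
    { p := k - 2
      hp := by omega
      L := leaveSet B
      e := fun x y => if x = y then 0 else r - pairDeg B x y
      d := fun x => s - ptDeg B x
      swap := by
        intro x y z h
        simp only [leaveSet, Finset.mem_filter, Finset.mem_univ, true_and] at h ⊢
        exact ⟨h.1.symm, h.2.2.1, h.2.1, fun b hb hh => h.2.2.2 b hb ⟨hh.2.1, hh.1, hh.2.2⟩⟩
      rot := by
        intro x y z h
        simp only [leaveSet, Finset.mem_filter, Finset.mem_univ, true_and] at h ⊢
        exact ⟨h.2.1, h.1, h.2.2.1.symm, fun b hb hh => h.2.2.2 b hb ⟨hh.1, hh.2.2, hh.2.1⟩⟩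
      irr := by
        intro x z h
        simp [leaveSet] at h
      he := by
        intro x y
        split_ifs with h
        · subst h
          simp [leaveSet]
        · have h1 := leave_count B hB hT h
          rw [Nat.mul_sub, ← hr]
          omega
      hd := by
        intro x
        rw [← Finset.add_sum_erase _ _ (Finset.mem_univ x), if_pos rfl, zero_add]
        rw [Finset.sum_congr rfl (g := fun y => r - pairDeg B x y)]
        · have h1 := hsum x
          rw [show k - 2 + 1 = k - 1 by omega, Nat.mul_sub]
          omega
        · intro y hy
          rw [if_neg (Finset.ne_of_mem_erase hy).symm] }
  have hd : ∑ x, S.d x + k * B.card = n * s := by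
    rw [← pt_sum B hB, ← Finset.sum_add_distrib, Finset.sum_congr rfl (g := fun _ => s)]
    · simp
    · intro x _
      exact Nat.sub_add_cancel (hpt x)
  have hp : S.p + 2 = k := by show k - 2 + 2 = k; omega
  have hc := S.core
  rw [hp] at hc
  by_contra hcon
  apply hns
  rw [← hd]
  refine Dvd.dvd.add (hc ?_) (Dvd.intro _ rfl)
  rw [mul_add] at hcon
  omega

end Bridge

theorem stmt3 (n k : ℕ) (hk : 4 ≤ k) (hkn : k < n)
    (h1 : (k - 2) ∣ (n - 2))
    (h2 : (k - 1) * (k - 2) ∣ (n - 1) * (n - 2))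
    (h3 : ¬ (k * (k - 1) * (k - 2) ∣ n * (n - 1) * (n - 2))) :
    (packingNumber n k 3 : ℤ) ≤
      ((n * ((n - 1) * ((n - 2) / (k - 2)) / (k - 1)) / k : ℕ) : ℤ) - 3 := by
  obtain ⟨r, hr⟩ := h1
  have hs0 : (k - 1) ∣ (n - 1) * r := by
    rw [hr, show (n - 1) * ((k - 2) * r) = ((n - 1) * r) * (k - 2) by ring] at h2
    exact Nat.dvd_of_mul_dvd_mul_right (by omega) h2
  obtain ⟨s, hs⟩ := hs0
  have hns : ¬ k ∣ n * s := by
    rintro ⟨t, ht⟩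
    apply h3
    refine ⟨t, ?_⟩
    calc n * (n - 1) * (n - 2) = n * ((n - 1) * r) * (k - 2) := by rw [hr]; ring
      _ = (n * s) * (k - 1) * (k - 2) := by rw [hs]; ring
      _ = _ := by rw [ht]; ring
  rw [hr, Nat.mul_div_cancel_left _ (by omega), hs, Nat.mul_div_cancel_left _ (by omega)]
  have key : ∀ m ∈ {m | ∃ B : Finset (Finset (Fin n)),
      (∀ b ∈ B, b.card = k) ∧
      (∀ T : Finset (Fin n), T.card = 3 → (B.filter (fun b => T ⊆ b)).card ≤ 1) ∧
      B.card = m}, m + 3 ≤ n * s / k := by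
    rintro m ⟨B, hB, hT, rfl⟩
    rw [Nat.le_div_iff_mul_le (by omega), mul_comm]
    exact packing_bound B hk hkn hr hs hns hB hT
  have hmem : packingNumber n k 3 ∈ {m | ∃ B : Finset (Finset (Fin n)),
      (∀ b ∈ B, b.card = k) ∧
      (∀ T : Finset (Fin n), T.card = 3 → (B.filter (fun b => T ⊆ b)).card ≤ 1) ∧
      B.card = m} := by
    apply Nat.sSup_mem
    · exact ⟨0, ∅, by simp⟩
    · exact ⟨n * s / k, fun m hm => by have := key m hm; omega⟩
  have := key _ hmem
  omega
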